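/- (Lemma 1) Fix a natural number t0 ≥ 1 and a real α with 1/(2(t0+1)) < α < 1/2. Let Y follow the ideal violation dynamics started from Y(t0) ∈ [0,1], and suppose Y(t0) ∉ κ(α, t0). Then there exists a time t' > t0 such that Y(t') ∈ κ(α, t'). -/

import Mathlib

/-- `β(t, α, Y) := |α − tY/(t+1) − 1/(t+1)| − |α − tY/(t+1)|`. -/
noncomputable def beta (t : ℕ) (α Y : ℝ) : ℝ :=
  |α - (t : ℝ) * Y / ((t : ℝ) + 1) - 1 / ((t : ℝ) + 1)| - |α - (t : ℝ) * Y / ((t : ℝ) + 1)|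

/-- The critical region `κ(α, t) := ( ((t+1)α − 1/2)/(t + 1/2), (t+1)α/(t + 1/2) )`. -/
def kappa (α : ℝ) (t : ℕ) : Set ℝ :=
  Set.Ioo ((((t : ℝ) + 1) * α - 1 / 2) / ((t : ℝ) + 1 / 2)) (((t : ℝ) + 1) * α / ((t : ℝ) + 1 / 2))

theorem beta_neg_iff (t : ℕ) (α Y : ℝ) :
    beta t α Y < 0 ↔ 1 / 2 < ((t : ℝ) + 1) * α - t * Y := by
  have ht : (0 : ℝ) < (t : ℝ) + 1 := by positivity
  unfold beta
  have hc : 0 < 1 / ((t : ℝ) + 1) := by positivity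
  have hx : α - (t : ℝ) * Y / ((t : ℝ) + 1)
      = (((t : ℝ) + 1) * α - t * Y) * (1 / ((t : ℝ) + 1)) := by field_simp
  rw [hx, sub_neg, ← sq_lt_sq]
  generalize 1 / ((t : ℝ) + 1) = c at *
  generalize ((t : ℝ) + 1) * α - t * Y = D at *
  have hc2 : 0 < c ^ 2 := by positivity
  constructor
  · intro h
    by_contra hD
    push Not at hD
    nlinarith
  · intro h
    nlinarith

theorem mem_kappa_iff (t : ℕ) (α Y : ℝ) :
    Y ∈ kappa α t ↔ Y / 2 < ((t : ℝ) + 1) * α - t * Y ∧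
      ((t : ℝ) + 1) * α - t * Y < 1 / 2 + Y / 2 := by
  have ht : (0 : ℝ) < (t : ℝ) + 1 / 2 := by positivity
  unfold kappa
  rw [Set.mem_Ioo, div_lt_iff₀ ht, lt_div_iff₀ ht]
  constructor <;> rintro ⟨h1, h2⟩ <;> constructor <;> linarith

theorem stmt_7 (t0 : ℕ) (ht0 : 1 ≤ t0) (α : ℝ)
    (hα0 : 1 / (2 * ((t0 : ℝ) + 1)) < α) (hα1 : α < 1 / 2)
    (Y : ℕ → ℝ) (hY0 : 0 ≤ Y t0) (hY1 : Y t0 ≤ 1)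
    (hdyn : ∀ t, t0 ≤ t →
      Y (t + 1) = ((t : ℝ) * Y t + (if beta t α (Y t) < 0 then 1 else 0)) / ((t : ℝ) + 1))
    (hstart : Y t0 ∉ kappa α t0) :
    ∃ t' : ℕ, t0 < t' ∧ Y t' ∈ kappa α t' := by
  by_contra hno
  push Not at hno
  have hpos : (0 : ℝ) < α := lt_trans (by positivity) hα0
  have h0 : ∀ t : ℕ, t0 ≤ t → 1 / 2 < ((t : ℝ) + 1) * α := by
    intro t ht
    have h : (t0 : ℝ) ≤ t := by exact_mod_cast ht
    rw [div_lt_iff₀ (by positivity)] at hα0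
    nlinarith
  have hstep : ∀ t : ℕ, t0 ≤ t → ((t : ℝ) + 1) * Y (t + 1)
      = t * Y t + (if 1 / 2 < ((t : ℝ) + 1) * α - t * Y t then 1 else 0) := by
    intro t ht
    have h1 : (0 : ℝ) < (t : ℝ) + 1 := by positivity
    rw [hdyn t ht]
    simp only [beta_neg_iff]
    field_simp
  have hb : ∀ t : ℕ, t0 ≤ t → 0 ≤ Y t ∧ Y t ≤ 1 := by
    intro t ht
    induction t, ht using Nat.le_induction with
    | base => exact ⟨hY0, hY1⟩
    | succ t ht ih =>
      obtain ⟨ha, hb⟩ := ih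
      have h1 : (0 : ℝ) ≤ (t : ℝ) := by positivity
      have hs := hstep t ht
      have h2 := mul_nonneg h1 ha
      have h3 := mul_le_mul_of_nonneg_left hb h1
      constructor
      · by_contra hc
        push Not at hc
        split_ifs at hs <;> nlinarith
      · by_contra hc
        push Not at hc
        split_ifs at hs <;> nlinarith
  have hno' : ∀ t : ℕ, t0 < t → ((t : ℝ) + 1) * α - t * Y t ≤ Y t / 2 ∨
      1 / 2 + Y t / 2 ≤ ((t : ℝ) + 1) * α - t * Y t := by
    intro t ht
    have h := hno t ht
    rw [mem_kappa_iff] at h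
    by_contra hc
    push Not at hc
    exact h hc
  obtain ⟨N, hN⟩ := exists_nat_gt (1 / (1 - 2 * α))
  have h12 : 0 < 1 - 2 * α := by linarith
  rw [div_lt_iff₀ h12] at hN
  -- low times propagate
  have hlow : ∀ t : ℕ, t0 + 1 + N ≤ t → ((t : ℝ) + 1) * α - t * Y t ≤ Y t / 2 →
      (((t + 1 : ℕ) : ℝ) + 1) * α - (t + 1 : ℕ) * Y (t + 1) ≤ Y (t + 1) / 2 ∧
      (((t + 1 : ℕ) : ℝ) + 1) * α - (t + 1 : ℕ) * Y (t + 1)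
        = ((t : ℝ) + 1) * α - t * Y t + α := by
    intro t ht hl
    obtain ⟨ha, hb1⟩ := hb t (by omega)
    have hs := hstep t (by omega)
    rw [if_neg (by linarith)] at hs
    have hNt : (N : ℝ) ≤ t := by exact_mod_cast (by omega : N ≤ t)
    have hD : (((t + 1 : ℕ) : ℝ) + 1) * α - (t + 1 : ℕ) * Y (t + 1)
        = ((t : ℝ) + 1) * α - t * Y t + α := by
      push_cast
      linarith
    refine ⟨?_, hD⟩
    rcases hno' (t + 1) (by omega) with h | h
    · exact h
    · exfalso
      rw [hD] at h
      have h1 : (1 - 2 * α) ≤ Y t - Y (t + 1) := by linarith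
      have h2 : ((t : ℝ) + 1) * (1 - 2 * α) ≤ ((t : ℝ) + 1) * (Y t - Y (t + 1)) :=
        mul_le_mul_of_nonneg_left h1 (by positivity)
      have h3 := mul_le_mul_of_nonneg_right hNt h12.le
      nlinarith
  by_cases hex : ∃ T : ℕ, t0 + 1 + N ≤ T ∧ ((T : ℝ) + 1) * α - T * Y T ≤ Y T / 2
  · obtain ⟨T, hT, hTl⟩ := hex
    have hall : ∀ n : ℕ, (((T + n : ℕ) : ℝ) + 1) * α - (T + n : ℕ) * Y (T + n) ≤ Y (T + n) / 2 ∧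
        (((T + n : ℕ) : ℝ) + 1) * α - (T + n : ℕ) * Y (T + n)
          = ((T : ℝ) + 1) * α - T * Y T + n * α := by
      intro n
      induction n with
      | zero => exact ⟨by simpa using hTl, by simp⟩
      | succ n ih =>
        obtain ⟨h1, h2⟩ := hlow (T + n) (by omega) ih.1
        refine ⟨h1, ?_⟩
        rw [← add_assoc, h2, ih.2]
        push_cast
        ring
    obtain ⟨n, hn⟩ := exists_nat_gt ((1 / 2 - (((T : ℝ) + 1) * α - T * Y T)) / α)
    rw [div_lt_iff₀ hpos] at hn
    have h1 := hall n
    have h2 := hb (T + n) (by omega)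
    linarith [h1.1, h1.2, h2.2]
  · push Not at hex
    have hhigh : ∀ t : ℕ, t0 + 1 + N ≤ t → 1 / 2 < ((t : ℝ) + 1) * α - t * Y t := by
      intro t ht
      have h1 := hex t ht
      obtain ⟨ha, hb1⟩ := hb t (by omega)
      rcases hno' t (by omega) with h | h
      · linarith
      · rcases ha.eq_or_lt with h2 | h2
        · rw [← h2]
          have := h0 t (by omega)
          linarith
        · linarith
    have hall : ∀ n : ℕ, (((t0 + 1 + N + n : ℕ) : ℝ) + 1) * α
          - (t0 + 1 + N + n : ℕ) * Y (t0 + 1 + N + n)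
        = (((t0 + 1 + N : ℕ) : ℝ) + 1) * α - (t0 + 1 + N : ℕ) * Y (t0 + 1 + N)
          - n * (1 - α) := by
      intro n
      induction n with
      | zero => simp
      | succ n ih =>
        have hs := hstep (t0 + 1 + N + n) (by omega)
        rw [if_pos (hhigh _ (by omega))] at hs
        rw [← add_assoc]
        push_cast at *
        linarith
    obtain ⟨n, hn⟩ := exists_nat_gt
      (((((t0 + 1 + N : ℕ) : ℝ) + 1) * α - (t0 + 1 + N : ℕ) * Y (t0 + 1 + N)) / (1 - α))
    rw [div_lt_iff₀ (by linarith)] at hn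
    have h1 := hall n
    have h2 := hhigh (t0 + 1 + N + n) (by omega)
    linarith
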